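/- Let α_1,…,α_l be independent Gamma random variables with shape N and scale parameters P_1,…,P_l > 0, and let Z > 0. Then Pr{Σ_{k=1}^l α_k < Z} = ((Z/P_1)···(Z/P_l))^N / Γ(lN+1) · Φ₂^l(N,…,N; lN+1; −Z/P_1,…,−Z/P_l), where Φ₂^l is the confluent Lauricella hypergeometric function of l variables: Φ₂^l(b_1,…,b_l; c; x_1,…,x_l) = Σ_{i_1,…,i_l ≥ 0} [(b_1)_{i_1}···(b_l)_{i_l} / (c)_{i_1+···+i_l}] · ∏_k x_k^{i_k}/i_k!. -/

import Mathlib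

open MeasureTheory ProbabilityTheory Real

lemma hasDerivAt_pow_succ_div_factorial (n : ℕ) (x : ℝ) :
    HasDerivAt (fun x : ℝ => x ^ (n + 1) / ((n + 1).factorial : ℝ))
      (x ^ n / (n.factorial : ℝ)) x := by
  refine ((hasDerivAt_pow (n + 1) x).div_const ((n + 1).factorial : ℝ)).congr_deriv ?_
  have := Nat.factorial_ne_zero n
  rw [Nat.factorial_succ]
  push_cast
  field_simp

/-- The convolution of two divided powers is a divided power. -/
lemma integral_pow_div_factorial_mul_pow_div_factorial (Z : ℝ) (p q : ℕ) :
    ∫ x in (0 : ℝ)..Z, x ^ p / (p.factorial : ℝ) * ((Z - x) ^ q / (q.factorial : ℝ)) =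
      Z ^ (p + q + 1) / ((p + q + 1).factorial : ℝ) := by
  have hd (n : ℕ) (x : ℝ) :
      HasDerivAt (fun x : ℝ => (Z - x) ^ (n + 1) / ((n + 1).factorial : ℝ))
        (-((Z - x) ^ n / (n.factorial : ℝ))) x :=
    ((hasDerivAt_pow_succ_div_factorial n (Z - x)).comp x
      ((hasDerivAt_id x).const_sub Z)).congr_deriv (by simp)
  induction p generalizing q with
  | zero =>
    have h := intervalIntegral.integral_eq_sub_of_hasDerivAt (a := 0) (b := Z)
      (fun x _ => hd q x) (Continuous.intervalIntegrable (by fun_prop) _ _)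
    rw [intervalIntegral.integral_neg] at h
    simp only [sub_self, sub_zero] at h
    simp only [pow_zero, Nat.factorial_zero, Nat.cast_one, div_one, one_mul, zero_add]
    rw [zero_pow (by omega), zero_div] at h
    linarith
  | succ p ih =>
    have h := intervalIntegral.integral_eq_sub_of_hasDerivAt (a := 0) (b := Z)
      (fun x _ => (hasDerivAt_pow_succ_div_factorial p x).mul (hd q x))
      (Continuous.intervalIntegrable (by fun_prop) _ _)
    rw [intervalIntegral.integral_add (Continuous.intervalIntegrable (by fun_prop) _ _)
      (Continuous.intervalIntegrable (by fun_prop) _ _)] at h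
    simp only [mul_neg, intervalIntegral.integral_neg, ih (q + 1), Pi.mul_apply] at h
    simp at h
    rw [show p + 1 + q + 1 = p + (q + 1) + 1 by ring]
    linarith

/-- Termwise convolution of two series of divided powers. -/
lemma hasSum_integral_mul_comp_sub {ι κ : Type*} [Countable ι] [Countable κ]
    {a : ι → ℝ} {p : ι → ℕ} {c : κ → ℝ} {q : κ → ℕ} {f g : ℝ → ℝ} {Z : ℝ} (hZ : 0 < Z)
    (hf : ∀ x, 0 < x → HasSum (fun i => a i * (x ^ p i / ((p i).factorial : ℝ))) (f x))
    (hg : ∀ x, 0 < x → HasSum (fun k => c k * (x ^ q k / ((q k).factorial : ℝ))) (g x)) :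
    HasSum (fun t : ι × κ => a t.1 * c t.2 *
        (Z ^ (p t.1 + q t.2 + 1) / ((p t.1 + q t.2 + 1).factorial : ℝ)))
      (∫ x in Set.Ioo 0 Z, f x * g (Z - x)) := by
  let F : ι × κ → ℝ → ℝ := fun t x =>
    (a t.1 * (x ^ p t.1 / ((p t.1).factorial : ℝ))) *
      (c t.2 * ((Z - x) ^ q t.2 / ((q t.2).factorial : ℝ)))
  have hint (u v : ℝ) (m n : ℕ) :
      ∫ x in Set.Ioo 0 Z, (u * (x ^ m / (m.factorial : ℝ))) *
        (v * ((Z - x) ^ n / (n.factorial : ℝ))) =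
      u * v * (Z ^ (m + n + 1) / ((m + n + 1).factorial : ℝ)) := by
    rw [← integral_Ioc_eq_integral_Ioo, ← intervalIntegral.integral_of_le hZ.le,
      ← integral_pow_div_factorial_mul_pow_div_factorial,
      ← intervalIntegral.integral_const_mul]
    congr 1 with x
    ring
  have hF : ∀ t, Integrable (F t) (volume.restrict (Set.Ioo 0 Z)) := fun t =>
    (Continuous.integrableOn_Icc (by fun_prop)).mono_set Set.Ioo_subset_Icc_self
  have hnorm (t : ι × κ) : ∫ x in Set.Ioo 0 Z, ‖F t x‖ =
      |a t.1| * |c t.2| *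
        (Z ^ (p t.1 + q t.2 + 1) / ((p t.1 + q t.2 + 1).factorial : ℝ)) := by
    rw [← hint]
    refine setIntegral_congr_fun measurableSet_Ioo fun x hx => ?_
    have h1 : 0 ≤ x := hx.1.le
    have h2 : 0 ≤ Z - x := by linarith [hx.2]
    simp only [F, norm_eq_abs, abs_mul, abs_div, abs_pow, abs_of_nonneg h1, abs_of_nonneg h2,
      Nat.abs_cast]
  have hsum : Summable fun t => ∫ x in Set.Ioo 0 Z, ‖F t x‖ := by
    refine Summable.of_nonneg_of_le (fun t => integral_nonneg fun x => norm_nonneg _) (fun t => ?_)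
      ((Summable.mul_norm (hf Z hZ).summable.norm (hg Z hZ).summable.norm).mul_left Z)
    have hle : ((p t.1).factorial : ℝ) * ((q t.2).factorial : ℝ) ≤
        ((p t.1 + q t.2 + 1).factorial : ℝ) := by
      have := (Nat.le_of_dvd (Nat.factorial_pos _)
        (Nat.factorial_mul_factorial_dvd_factorial_add (p t.1) (q t.2))).trans
        (Nat.factorial_le (Nat.le_succ (p t.1 + q t.2)))
      exact_mod_cast this
    rw [hnorm]
    simp only [norm_eq_abs, abs_mul, abs_div, abs_pow, abs_of_pos hZ, Nat.abs_cast]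
    calc |a t.1| * |c t.2| *
          (Z ^ (p t.1 + q t.2 + 1) / ((p t.1 + q t.2 + 1).factorial : ℝ))
        ≤ |a t.1| * |c t.2| * (Z ^ (p t.1 + q t.2 + 1) /
          (((p t.1).factorial : ℝ) * ((q t.2).factorial : ℝ))) := by gcongr
      _ = _ := by ring
  have key := hasSum_integral_of_summable_integral_norm hF hsum
  simp only [F, hint] at key
  have hfg : ∫ x in Set.Ioo 0 Z, f x * g (Z - x) = ∫ x in Set.Ioo 0 Z, ∑' t, F t x := ?_
  · rw [hfg]
    exact key
  refine setIntegral_congr_fun measurableSet_Ioo fun x hx => ?_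
  have h1 := hf x hx.1
  have h2 := hg (Z - x) (sub_pos.2 hx.2)
  exact (h1.mul h2 (Summable.mul_norm h1.summable.norm h2.summable.norm).of_norm).tsum_eq.symm

/-- Coefficients, in divided powers, of the density of the gamma distribution of shape `M + 1`
and rate `r`. -/
noncomputable def gammaPDFCoeff (M : ℕ) (r : ℝ) (j : ℕ) : ℝ :=
  r ^ (M + 1) * (((M + j).factorial : ℝ) / (M.factorial : ℝ)) * ((-r) ^ j / (j.factorial : ℝ))

lemma hasSum_gammaPDFReal (M : ℕ) (r : ℝ) {x : ℝ} (hx : 0 < x) :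
    HasSum (fun j => gammaPDFCoeff M r j * (x ^ (M + j) / ((M + j).factorial : ℝ)))
      (gammaPDFReal ((M + 1 : ℕ) : ℝ) r x) := by
  have h := (NormedSpace.expSeries_div_hasSum_exp (-(r * x))).mul_left
    (r ^ (M + 1) / (M.factorial : ℝ) * x ^ M)
  have hM : ((M + 1 : ℕ) : ℝ) - 1 = (M : ℝ) := by push_cast; ring
  have hG : Real.Gamma ((M + 1 : ℕ) : ℝ) = (M.factorial : ℝ) := by
    rw [← Real.Gamma_nat_eq_factorial]; push_cast; rfl
  rw [gammaPDFReal, if_pos hx.le, hM, hG, rpow_natCast, rpow_natCast, Real.exp_eq_exp_ℝ]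
  have hterm (j : ℕ) : gammaPDFCoeff M r j * (x ^ (M + j) / ((M + j).factorial : ℝ)) =
      r ^ (M + 1) / (M.factorial : ℝ) * x ^ M * ((-(r * x)) ^ j / (j.factorial : ℝ)) := by
    have h1 : ((M + j).factorial : ℝ) ≠ 0 := by positivity
    rw [gammaPDFCoeff, show -(r * x) = -r * x by ring, mul_pow, pow_add x]
    field_simp
  simpa only [hterm] using h

/-- Conditioning a sum of independent gamma variables on the first one. -/
lemma measureReal_pi_gammaMeasure_succ {n : ℕ} {a : ℝ} (ha : 0 < a) {r : Fin (n + 1) → ℝ}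
    (hr : ∀ k, 0 < r k) (Z : ℝ) :
    (Measure.pi fun k => gammaMeasure a (r k)).real {x | ∑ k, x k < Z} =
      ∫ x, gammaPDFReal a (r 0) x *
        (Measure.pi fun k : Fin n => gammaMeasure a (r k.succ)).real {y | ∑ k, y k < Z - x} := by
  have hp : ∀ k, IsProbabilityMeasure (gammaMeasure a (r k)) :=
    fun k => isProbabilityMeasure_gammaMeasure ha (hr k)
  have hs : MeasurableSet {t : ℝ × (Fin n → ℝ) | t.1 + ∑ k, t.2 k < Z} :=
    measurableSet_lt (by fun_prop) measurable_const
  have hmp := measurePreserving_piFinSuccAbove (fun k => gammaMeasure a (r k)) 0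
  have hpre := hmp.measure_preimage hs.nullMeasurableSet
  have hset : (MeasurableEquiv.piFinSuccAbove (fun _ : Fin (n + 1) => ℝ) 0) ⁻¹'
      {t : ℝ × (Fin n → ℝ) | t.1 + ∑ k, t.2 k < Z} = {x | ∑ k, x k < Z} := by
    ext x
    simp [Fin.sum_univ_succ, MeasurableEquiv.piFinSuccAbove, Fin.insertNthEquiv, Fin.tail]
  simp only [Fin.zero_succAbove] at hpre
  rw [hset, Measure.prod_apply hs] at hpre
  have hm := measurable_measure_prodMk_left
    (ν := Measure.pi fun k : Fin n => gammaMeasure a (r k.succ)) hs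
  rw [measureReal_def, hpre, ← integral_toReal hm.aemeasurable
    (Filter.Eventually.of_forall fun x => measure_lt_top _ _), gammaMeasure,
    integral_withDensity_eq_integral_toReal_smul
      (f := gammaPDF a (r 0)) (measurable_gammaPDFReal a (r 0)).ennreal_ofReal
      (Filter.Eventually.of_forall fun x => ENNReal.ofReal_lt_top)]
  congr 1 with x
  rw [gammaPDF, ENNReal.toReal_ofReal, smul_eq_mul]
  · simp only [measureReal_def, Set.preimage_ofPred_eq, lt_sub_iff_add_lt']
  · exact gammaPDFReal_nonneg ha (hr 0) x

lemma measureReal_pi_gammaMeasure_of_nonpos {n : ℕ} {a : ℝ} (ha : 0 < a) {r : Fin n → ℝ}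
    (hr : ∀ k, 0 < r k) {Z : ℝ} (hZ : Z ≤ 0) :
    (Measure.pi fun k => gammaMeasure a (r k)).real {x | ∑ k, x k < Z} = 0 := by
  induction n generalizing Z with
  | zero => simp [hZ.not_gt]
  | succ n ih =>
    rw [measureReal_pi_gammaMeasure_succ ha hr]
    refine integral_eq_zero_of_ae (Filter.Eventually.of_forall fun x => ?_)
    rcases lt_or_ge x 0 with hx | hx
    · simp [gammaPDFReal, hx.not_ge]
    · simp [ih (fun k => hr k.succ) (Z := Z - x) (by linarith)]

/-- Series in divided powers for the distribution function of a sum of independent gamma variables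
of shape `M + 1` and rates `r k`. -/
lemma hasSum_measureReal_pi_gammaMeasure {n : ℕ} (M : ℕ) {r : Fin n → ℝ}
    (hr : ∀ k, 0 < r k) {Z : ℝ} (hZ : 0 < Z) :
    HasSum (fun i : Fin n → ℕ => (∏ k, gammaPDFCoeff M (r k) (i k)) *
        (Z ^ (∑ k, (M + i k + 1)) / ((∑ k, (M + i k + 1)).factorial : ℝ)))
      ((Measure.pi fun k => gammaMeasure ((M + 1 : ℕ) : ℝ) (r k)).real {x | ∑ k, x k < Z}) := by
  induction n generalizing Z with
  | zero =>
    simp [measureReal_def, hZ]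
  | succ n ih =>
    have ha : (0 : ℝ) < ((M + 1 : ℕ) : ℝ) := by positivity
    have h := hasSum_integral_mul_comp_sub hZ
      (fun x hx => hasSum_gammaPDFReal M (r 0) hx)
      (fun x hx => ih (fun k => hr k.succ) hx)
    rw [measureReal_pi_gammaMeasure_succ ha hr, ← (Fin.consEquiv fun _ => ℕ).hasSum_iff]
    convert h using 1
    · ext t
      simp only [Function.comp_apply, Fin.consEquiv_apply, Fin.prod_univ_succ, Fin.sum_univ_succ,
        Fin.cons_zero, Fin.cons_succ]
      rw [show M + t.1 + 1 + ∑ k, (M + t.2 k + 1) = M + t.1 + ∑ k, (M + t.2 k + 1) + 1 by ring]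
    · rw [← integral_Ico_eq_integral_Ioo]
      refine (setIntegral_eq_integral_of_forall_compl_eq_zero fun x hx => ?_).symm
      rcases lt_or_ge x 0 with h0 | h0
      · simp [gammaPDFReal, h0.not_ge]
      · have : Z ≤ x := by simpa [h0] using hx
        rw [measureReal_pi_gammaMeasure_of_nonpos ha (fun k => hr k.succ) (by linarith), mul_zero]

/-- For independent `α_k ~ Gamma(N, scale P_k)` and `Z > 0`,
`Pr{∑_{k=1}^l α_k < Z} = ((Z/P_1)⋯(Z/P_l))^N / Γ(lN+1) · Φ₂^l(N,…,N; lN+1; -Z/P_1,…,-Z/P_l)`,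
where `Φ₂^l` is the confluent Lauricella hypergeometric function of `l` variables, written
as the absolutely convergent multiple series with Pochhammer symbols `(x)_y = Γ(x+y)/Γ(x)`. -/
theorem stmt5 (N l : ℕ) (hN : 0 < N) (hl : 0 < l) (P : Fin l → ℝ) (hP : ∀ k, 0 < P k)
    (Z : ℝ) (hZ : 0 < Z) :
    (Measure.pi (fun k => gammaMeasure (N : ℝ) (1 / P k))
        {x : Fin l → ℝ | ∑ k, x k < Z}).toReal =
      (∏ k, Z / P k) ^ N / Real.Gamma ((l * N : ℕ) + 1) *
        ∑' i : Fin l → ℕ,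
          ((∏ k, Real.Gamma ((N : ℝ) + i k) / Real.Gamma N) /
              (Real.Gamma (((l * N : ℕ) + 1 : ℝ) + (∑ k, i k : ℕ)) /
                Real.Gamma ((l * N : ℕ) + 1))) *
            ∏ k, (-(Z / P k)) ^ (i k) / ((i k).factorial : ℝ) := by
  obtain ⟨M, rfl⟩ : ∃ M, N = M + 1 := ⟨N - 1, by omega⟩
  have hG (m : ℕ) {y : ℝ} (hy : y = m + 1) : Real.Gamma y = (m.factorial : ℝ) := by
    rw [hy, Real.Gamma_nat_eq_factorial]
  have h := (hasSum_measureReal_pi_gammaMeasure M (r := fun k => 1 / P k)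
    (fun k => one_div_pos.2 (hP k)) hZ).tsum_eq
  rw [measureReal_def] at h
  rw [← h, ← tsum_mul_left]
  refine tsum_congr fun i => ?_
  have hexp : ∑ k, (M + i k + 1) = l * (M + 1) + ∑ k, i k := by
    simp only [Finset.sum_add_distrib, Finset.sum_const, Finset.card_univ, Fintype.card_fin,
      smul_eq_mul]
    ring
  have hpow : Z ^ (l * (M + 1) + ∑ k, i k) = ∏ k : Fin l, (Z ^ (M + 1) * Z ^ i k) := by
    rw [Finset.prod_mul_distrib, Finset.prod_const, Finset.card_univ, Fintype.card_fin,
      Finset.prod_pow_eq_pow_sum, pow_add, ← pow_mul, mul_comm l]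
  have hne : ((l * (M + 1)).factorial : ℝ) ≠ 0 := by positivity
  rw [hG (l * (M + 1)) rfl,
    hG (y := ((l * (M + 1) : ℕ) + 1 : ℝ) + (∑ k, i k : ℕ)) (l * (M + 1) + ∑ k, i k)
      (by push_cast; ring),
    hG (y := ((M + 1 : ℕ) : ℝ)) M (by push_cast; rfl), hexp, hpow, ← Finset.prod_pow]
  have hprod : (∏ k, gammaPDFCoeff M (1 / P k) (i k)) * ∏ k : Fin l, (Z ^ (M + 1) * Z ^ i k) =
      (∏ k, (Z / P k) ^ (M + 1)) *
        (∏ k, Real.Gamma (((M + 1 : ℕ) : ℝ) + i k) / (M.factorial : ℝ)) *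
        ∏ k, (-(Z / P k)) ^ (i k) / ((i k).factorial : ℝ) := by
    simp only [← Finset.prod_mul_distrib]
    refine Finset.prod_congr rfl fun k _ => ?_
    rw [hG (M + i k) (by push_cast; ring), gammaPDFCoeff,
      show -(Z / P k) = -(1 / P k) * Z by ring, show Z / P k = 1 / P k * Z by ring, mul_pow,
      mul_pow]
    ring
  rw [← mul_div_assoc, hprod]
  generalize (∏ k, Real.Gamma (((M + 1 : ℕ) : ℝ) + i k) / (M.factorial : ℝ)) = A
  field_simp
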